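/- Two-sided Loewner bounds for the cofactor matrix: let d ≥ 1, A a symmetric d×d real matrix, and 0 < λm ≤ λM with λm•I ⪯ A ⪯ λM•I. Then max(λm^(d−1), det(A)/λM)•I ⪯ adjugate(A) ⪯ λM^(d−1)•I. -/

import Mathlib

/-!
Diagonalize `A` with eigenvalues `vᵢ`. Since adjugates commute with a change of basis, `adjugate A`
has the eigenvalues `∏ j ≠ i, vⱼ`. Each is a product of `card n - 1` numbers in the interval
`[a, b]` containing the spectrum of `A`, and multiplying it by `vᵢ ≤ b` gives `det A`.
-/

open Matrix Finset

section Conjugation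

variable {n R : Type*} [Fintype n] [DecidableEq n] [CommRing R]

theorem adjugate_eq_det_smul_of_mul_eq_one {U V : Matrix n n R} (h : U * V = 1) :
    U.adjugate = U.det • V :=
  calc
    U.adjugate = U.adjugate * U * V := by rw [mul_assoc, h, mul_one]
    _ = U.det • V := by rw [adjugate_mul, smul_one_mul]

theorem adjugate_conj_of_mul_eq_one {U V : Matrix n n R} (h : U * V = 1) (D : Matrix n n R) :
    (U * D * V).adjugate = U * D.adjugate * V := by
  have hdet : V.det * U.det = 1 := by rw [← det_mul, mul_eq_one_comm.mp h, det_one]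
  calc
    (U * D * V).adjugate = V.adjugate * (D.adjugate * U.adjugate) := by
      rw [adjugate_mul_distrib, adjugate_mul_distrib]
    _ = (V.det • U) * (D.adjugate * (U.det • V)) := by
      rw [adjugate_eq_det_smul_of_mul_eq_one h,
        adjugate_eq_det_smul_of_mul_eq_one (mul_eq_one_comm.mp h)]
    _ = U * D.adjugate * V := by
      rw [mul_smul_comm, smul_mul_smul_comm, hdet, one_smul, mul_assoc]

end Conjugation

section Loewner

open scoped ComplexOrder MatrixOrder

variable {n 𝕜 : Type*} [DecidableEq n] [RCLike 𝕜] {A : Matrix n n 𝕜} {a b : ℝ}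

theorem posSemidef_of_smul_one_le (ha : 0 ≤ a) (haA : a • (1 : Matrix n n 𝕜) ≤ A) :
    A.PosSemidef :=
  ((PosSemidef.one.smul ha).nonneg.trans haA).posSemidef

variable [Fintype n]

theorem spectrum_real_adjugate (hA : A.IsHermitian) :
    spectrum ℝ A.adjugate = Set.range fun i ↦ ∏ j ∈ univ.erase i, hA.eigenvalues j := by
  have hadj : A.adjugate = Unitary.conjStarAlgAut 𝕜 _ hA.eigenvectorUnitary
      (diagonal fun i ↦ ((∏ j ∈ univ.erase i, hA.eigenvalues j : ℝ) : 𝕜)) := by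
    conv_lhs => rw [hA.spectral_theorem]
    rw [Unitary.conjStarAlgAut_apply, Unitary.conjStarAlgAut_apply,
      adjugate_conj_of_mul_eq_one (Unitary.mul_star_self_of_mem hA.eigenvectorUnitary.2),
      adjugate_diagonal]
    simp only [Function.comp_apply, RCLike.ofReal_prod]
  ext x
  rw [hadj, ← spectrum.preimage_algebraMap 𝕜, Set.mem_preimage, AlgEquiv.spectrum_eq,
    spectrum_diagonal]
  simp only [Set.mem_range, RCLike.algebraMap_eq_ofReal, RCLike.ofReal_inj]

theorem smul_one_le_iff_of_spectrum_eq_range {ι : Type*} {v : ι → ℝ} (hA : A.IsHermitian)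
    (hv : spectrum ℝ A = Set.range v) : a • (1 : Matrix n n 𝕜) ≤ A ↔ ∀ i, a ≤ v i := by
  rw [← Algebra.algebraMap_eq_smul_one, algebraMap_le_iff_le_spectrum hA.isSelfAdjoint, hv,
    Set.forall_mem_range]

theorem le_smul_one_iff_of_spectrum_eq_range {ι : Type*} {v : ι → ℝ} (hA : A.IsHermitian)
    (hv : spectrum ℝ A = Set.range v) : A ≤ b • (1 : Matrix n n 𝕜) ↔ ∀ i, v i ≤ b := by
  rw [← Algebra.algebraMap_eq_smul_one, le_algebraMap_iff_spectrum_le hA.isSelfAdjoint, hv,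
    Set.forall_mem_range]

theorem eigenvalues_le_of_le_smul_one (hA : A.IsHermitian) (hAb : A ≤ b • (1 : Matrix n n 𝕜))
    (i : n) : hA.eigenvalues i ≤ b :=
  (le_smul_one_iff_of_spectrum_eq_range hA hA.spectrum_real_eq_range_eigenvalues).mp hAb i

theorem le_eigenvalues_of_smul_one_le (hA : A.IsHermitian) (haA : a • (1 : Matrix n n 𝕜) ≤ A)
    (i : n) : a ≤ hA.eigenvalues i :=
  (smul_one_le_iff_of_spectrum_eq_range hA hA.spectrum_real_eq_range_eigenvalues).mp haA i

theorem pow_smul_one_le_adjugate (ha : 0 ≤ a) (haA : a • (1 : Matrix n n 𝕜) ≤ A) :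
    a ^ (Fintype.card n - 1) • (1 : Matrix n n 𝕜) ≤ A.adjugate := by
  have hA : A.IsHermitian := (posSemidef_of_smul_one_le ha haA).isHermitian
  refine (smul_one_le_iff_of_spectrum_eq_range hA.adjugate
    (spectrum_real_adjugate hA)).mpr fun i ↦ ?_
  calc
    a ^ (Fintype.card n - 1) = ∏ _j ∈ univ.erase i, a := by
      rw [prod_const, card_erase_of_mem (mem_univ i), card_univ]
    _ ≤ ∏ j ∈ univ.erase i, hA.eigenvalues j :=
      prod_le_prod (fun _ _ ↦ ha) fun j _ ↦ le_eigenvalues_of_smul_one_le hA haA j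

theorem adjugate_le_pow_smul_one (hA : A.PosSemidef) (hAb : A ≤ b • (1 : Matrix n n 𝕜)) :
    A.adjugate ≤ b ^ (Fintype.card n - 1) • (1 : Matrix n n 𝕜) := by
  refine (le_smul_one_iff_of_spectrum_eq_range hA.isHermitian.adjugate
    (spectrum_real_adjugate hA.isHermitian)).mpr fun i ↦ ?_
  calc
    ∏ j ∈ univ.erase i, hA.isHermitian.eigenvalues j ≤ ∏ _j ∈ univ.erase i, b :=
      prod_le_prod (fun j _ ↦ hA.eigenvalues_nonneg j) fun j _ ↦
        eigenvalues_le_of_le_smul_one hA.isHermitian hAb j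
    _ = b ^ (Fintype.card n - 1) := by
      rw [prod_const, card_erase_of_mem (mem_univ i), card_univ]

theorem det_div_smul_one_le_adjugate (hb : 0 < b) (hA : A.PosSemidef)
    (hAb : A ≤ b • (1 : Matrix n n 𝕜)) :
    (RCLike.re A.det / b) • (1 : Matrix n n 𝕜) ≤ A.adjugate := by
  refine (smul_one_le_iff_of_spectrum_eq_range hA.isHermitian.adjugate
    (spectrum_real_adjugate hA.isHermitian)).mpr fun i ↦ (div_le_iff₀ hb).mpr ?_
  calc
    RCLike.re A.det = ∏ j, hA.isHermitian.eigenvalues j := by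
      rw [hA.isHermitian.det_eq_prod_eigenvalues, ← RCLike.ofReal_prod, RCLike.ofReal_re]
    _ = (∏ j ∈ univ.erase i, hA.isHermitian.eigenvalues j) * hA.isHermitian.eigenvalues i :=
      (prod_erase_mul _ _ (mem_univ i)).symm
    _ ≤ (∏ j ∈ univ.erase i, hA.isHermitian.eigenvalues j) * b :=
      mul_le_mul_of_nonneg_left (eigenvalues_le_of_le_smul_one hA.isHermitian hAb i)
        (prod_nonneg fun j _ ↦ hA.eigenvalues_nonneg j)

theorem adjugate_loewner_bounds_general (ha : 0 ≤ a) (hb : 0 < b)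
    (haA : a • (1 : Matrix n n 𝕜) ≤ A) (hAb : A ≤ b • (1 : Matrix n n 𝕜)) :
    max (a ^ (Fintype.card n - 1)) (RCLike.re A.det / b) • (1 : Matrix n n 𝕜) ≤ A.adjugate ∧
      A.adjugate ≤ b ^ (Fintype.card n - 1) • (1 : Matrix n n 𝕜) := by
  have hA : A.PosSemidef := posSemidef_of_smul_one_le ha haA
  refine ⟨?_, adjugate_le_pow_smul_one hA hAb⟩
  rcases max_choice (a ^ (Fintype.card n - 1)) (RCLike.re A.det / b) with h | h <;> rw [h]
  · exact pow_smul_one_le_adjugate ha haA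
  · exact det_div_smul_one_le_adjugate hb hA hAb

end Loewner

/-- Two-sided Loewner bounds for the cofactor (adjugate) matrix. -/
theorem adjugate_loewner_bounds (d : ℕ) (hd : 1 ≤ d)
    (A : Matrix (Fin d) (Fin d) ℝ) (hA : A.IsHermitian)
    (lm lM : ℝ) (hlm : 0 < lm) (hlmM : lm ≤ lM)
    (hAlm : (A - lm • (1 : Matrix (Fin d) (Fin d) ℝ)).PosSemidef)
    (hAlM : (lM • (1 : Matrix (Fin d) (Fin d) ℝ) - A).PosSemidef) :
    (A.adjugate - max (lm ^ (d - 1)) (A.det / lM) • (1 : Matrix (Fin d) (Fin d) ℝ)).PosSemidef ∧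
    (lM ^ (d - 1) • (1 : Matrix (Fin d) (Fin d) ℝ) - A.adjugate).PosSemidef := by
  simpa only [Fintype.card_fin, RCLike.re_to_real, le_iff] using
    adjugate_loewner_bounds_general hlm.le (hlm.trans_le hlmM) hAlm hAlM
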